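/- arXiv:2405.07080 — 5 statements merged into one kernel-verified Lean document; each statement's English description precedes it below -/
import Mathlib

section
/- Let p be a prime, n ≥ 2, and let q : 𝓗(pⁿ) → 𝓗(pⁿ⁻¹) be componentwise reduction modulo pⁿ⁻¹. For every nonempty subset S of 𝓗(pⁿ), the centralizer C(S) is a normal subgroup of the pseudocentralizer P(S) = P(S; q). -/
theorem pc_mem_ker_iff {G K : Type*} [Group G] [Group K] (q : G →* K) (s g : G) :
    s⁻¹ * g⁻¹ * s * g ∈ q.ker ↔ Commute (q s) (q g) := by
  rw [MonoidHom.mem_ker]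
  simp only [map_mul, map_inv]
  rw [mul_assoc, ← mul_inv_rev, inv_mul_eq_one, commute_iff_eq]
  exact eq_comm

/-- The `q`-pseudocentralizer of a subset `S` of `G`:
all `g` such that `[s, g] = s⁻¹ * g⁻¹ * s * g ∈ ker q` for all `s ∈ S`. -/
def pseudocentralizer {G K : Type*} [Group G] [Group K] (q : G →* K) (S : Set G) :
    Subgroup G where
  carrier := {g : G | ∀ s ∈ S, s⁻¹ * g⁻¹ * s * g ∈ q.ker}
  one_mem' := fun s _ => by
    rw [pc_mem_ker_iff, map_one]
    exact Commute.one_right _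
  mul_mem' := fun {a b} ha hb s hs => by
    rw [pc_mem_ker_iff, map_mul]
    exact ((pc_mem_ker_iff q s a).mp (ha s hs)).mul_right ((pc_mem_ker_iff q s b).mp (hb s hs))
  inv_mem' := fun {a} ha s hs => by
    rw [pc_mem_ker_iff, map_inv]
    exact ((pc_mem_ker_iff q s a).mp (ha s hs)).inv_right

theorem mem_pseudocentralizer_iff {G K : Type*} [Group G] [Group K] {q : G →* K} {S : Set G}
    {g : G} : g ∈ pseudocentralizer q S ↔ ∀ s ∈ S, s⁻¹ * g⁻¹ * s * g ∈ q.ker := Iff.rfl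

/-- The mod `r` Heisenberg group, as triples `(x, y, z)` over `ZMod r`. -/
@[ext]
structure Heis (r : ℕ) where
  x : ZMod r
  y : ZMod r
  z : ZMod r

namespace Heis

variable {r : ℕ}

private def hmul (a b : Heis r) : Heis r := ⟨a.x + b.x, a.y + b.y + a.x * b.z, a.z + b.z⟩
private def hone : Heis r := ⟨0, 0, 0⟩
private def hinv (a : Heis r) : Heis r := ⟨-a.x, a.x * a.z - a.y, -a.z⟩

instance : Group (Heis r) where
  mul := hmul
  one := hone
  inv := hinv
  mul_assoc a b c := by
    show hmul (hmul a b) c = hmul a (hmul b c)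
    ext <;> (dsimp [hmul]; ring)
  one_mul a := by
    show hmul hone a = a
    ext <;> (dsimp [hmul, hone]; ring)
  mul_one a := by
    show hmul a hone = a
    ext <;> (dsimp [hmul, hone]; ring)
  inv_mul_cancel a := by
    show hmul (hinv a) a = hone
    ext <;> (dsimp [hmul, hinv, hone]; ring)

@[simp] theorem mul_x (a b : Heis r) : (a * b).x = a.x + b.x := rfl
@[simp] theorem mul_y (a b : Heis r) : (a * b).y = a.y + b.y + a.x * b.z := rfl
@[simp] theorem mul_z (a b : Heis r) : (a * b).z = a.z + b.z := rfl
@[simp] theorem one_x : (1 : Heis r).x = 0 := rfl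
@[simp] theorem one_y : (1 : Heis r).y = 0 := rfl
@[simp] theorem one_z : (1 : Heis r).z = 0 := rfl
@[simp] theorem inv_x (a : Heis r) : (a⁻¹).x = -a.x := rfl
@[simp] theorem inv_y (a : Heis r) : (a⁻¹).y = a.x * a.z - a.y := rfl
@[simp] theorem inv_z (a : Heis r) : (a⁻¹).z = -a.z := rfl

/-- Componentwise reduction `Heis r → Heis s` when `s ∣ r`. -/
def heisMap {r s : ℕ} (h : s ∣ r) : Heis r →* Heis s where
  toFun a := ⟨ZMod.castHom h (ZMod s) a.x, ZMod.castHom h (ZMod s) a.y, ZMod.castHom h (ZMod s) a.z⟩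
  map_one' := by
    ext <;> simp only [one_x, one_y, one_z, map_zero]
  map_mul' a b := by
    ext <;> simp only [mul_x, mul_y, mul_z, map_add, map_mul]

end Heis

/-- Componentwise reduction modulo `p ^ (n - 1)` from `Heis (p ^ n)` to `Heis (p ^ (n - 1))`. -/
def heisQ (p n : ℕ) : Heis (p ^ n) →* Heis (p ^ (n - 1)) :=
  Heis.heisMap (pow_dvd_pow p (Nat.sub_le n 1))

theorem centralizer_le_pseudocentralizer {G K : Type*} [Group G] [Group K] (q : G →* K)
    (S : Set G) : Subgroup.centralizer S ≤ pseudocentralizer q S := fun g hg s hs =>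
  (pc_mem_ker_iff q s g).mpr (Commute.map (hg s hs) q)

theorem normal_centralizer_of_commutator_le_center {G : Type*} [Group G]
    (hG : commutator G ≤ Subgroup.center G) (S : Set G) : (Subgroup.centralizer S).Normal :=
  .of_commutator_le G (hG.trans (Subgroup.center_le_centralizer S))

theorem statement6_general {G K : Type*} [Group G] [Group K]
    (hG : commutator G ≤ Subgroup.center G) (q : G →* K) (S : Set G) :
    Subgroup.centralizer S ≤ pseudocentralizer q S ∧
      ((Subgroup.centralizer S).subgroupOf (pseudocentralizer q S)).Normal :=
  ⟨centralizer_le_pseudocentralizer q S,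
    (normal_centralizer_of_commutator_le_center hG S).subgroupOf _⟩

namespace Heis

open scoped commutatorElement

variable {r : ℕ}

theorem commute_iff (a b : Heis r) : Commute a b ↔ a.x * b.z = b.x * a.z := by
  rw [commute_iff_eq, Heis.ext_iff]
  simp only [mul_x, mul_y, mul_z, add_comm b.x, add_comm b.y, add_comm b.z, add_right_inj,
    true_and, and_true]

theorem mem_center_iff {c : Heis r} :
    c ∈ Subgroup.center (Heis r) ↔ c.x = 0 ∧ c.z = 0 := by
  have hcenter : c ∈ Subgroup.center (Heis r) ↔ ∀ a : Heis r, a.x * c.z = c.x * a.z :=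
    Subgroup.mem_center_iff.trans (forall_congr' fun a => commute_iff a c)
  rw [hcenter]
  constructor
  · intro h
    constructor
    · simpa using (h ⟨0, 0, 1⟩).symm
    · simpa using h ⟨1, 0, 0⟩
  · rintro ⟨hx, hz⟩ a
    rw [hx, hz, mul_zero, zero_mul]

theorem commutator_le_center : commutator (Heis r) ≤ Subgroup.center (Heis r) := by
  rw [commutator_def, Subgroup.commutator_le]
  intro a _ b _
  have hx : ⁅a, b⁆.x = 0 := by
    simp only [commutatorElement_def, mul_x, inv_x]
    ring
  have hz : ⁅a, b⁆.z = 0 := by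
    simp only [commutatorElement_def, mul_z, inv_z]
    ring
  exact mem_center_iff.mpr ⟨hx, hz⟩

end Heis

/-- for every nonempty `S ⊆ 𝓗(pⁿ)`, the centralizer `C(S)` is a normal subgroup of
the pseudocentralizer `P(S) = P(S; q)`. -/
theorem statement6 (p n : ℕ) (hp : p.Prime) (hn : 2 ≤ n) (S : Set (Heis (p ^ n)))
    (hS : S.Nonempty) :
    Subgroup.centralizer S ≤ pseudocentralizer (heisQ p n) S ∧
      ((Subgroup.centralizer S).subgroupOf (pseudocentralizer (heisQ p n) S)).Normal :=
  statement6_general Heis.commutator_le_center (heisQ p n) S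
end

section
/- Let p be a prime, n ≥ 2, and let q : 𝓗(pⁿ) → 𝓗(pⁿ⁻¹) be componentwise reduction modulo pⁿ⁻¹. If h ∈ 𝓗(pⁿ) is a non-central element, then |P(h)| = p · |C(h)|, and the quotient group P(h)/C(h) is isomorphic to ℤ/pℤ. -/
/-!
For fixed `h`, the commutator of `h` and `g` has a single nontrivial coordinate,
`h.x * g.z - g.x * h.z`, which is a homomorphism in `g` with kernel `C(h)`. The preimage of the
kernel of `ZMod r → ZMod s` under it is `P(h)`, and its range is the ideal generated by `h.x` and
`h.z`. If this ideal contains `s`, it contains that kernel, so `P(h)/C(h)` is isomorphic to the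
kernel, which is cyclic of order `r / s`. For `r = p ^ (m + 1)` every nonzero ideal of `ZMod r`
contains `p ^ m`, and a non-central `h` has `h.x ≠ 0` or `h.z ≠ 0`.
-/

section SurjectiveHom

variable {G A M : Type*} [Group G] [Group A] [Group M]

theorem exists_surjective_ker_eq_ker_subgroupOf_comap {f : G →* A} {S : Subgroup A}
    (hS : S ≤ f.range) (e : S ≃* M) :
    ∃ φ : S.comap f →* M, Function.Surjective φ ∧ φ.ker = f.ker.subgroupOf (S.comap f) := by
  refine ⟨e.toMonoidHom.comp (f.subgroupComap S), e.surjective.comp ?_, ?_⟩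
  · rintro ⟨a, ha⟩
    obtain ⟨g, rfl⟩ := hS ha
    exact ⟨⟨g, ha⟩, rfl⟩
  · ext g
    exact e.map_eq_one_iff.trans Subtype.ext_iff

theorem card_eq_card_mul_card_of_ker_eq_subgroupOf {H K : Subgroup G} (hHK : H ≤ K)
    {φ : K →* M} (hφ : Function.Surjective φ) (hker : φ.ker = H.subgroupOf K) :
    Nat.card K = Nat.card M * Nat.card H := by
  have hindex : H.relIndex K = Nat.card M := by
    rw [Subgroup.relIndex, ← hker, Subgroup.index_ker, MonoidHom.range_eq_top.mpr hφ,
      Subgroup.card_top]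
  rw [← Subgroup.relIndex_bot_left, ← Subgroup.relIndex_mul_relIndex ⊥ H K bot_le hHK, hindex,
    Subgroup.relIndex_bot_left, mul_comm]

end SurjectiveHom

/-- The reduction `ZMod r → ZMod s` of additive groups, written multiplicatively so that it can be
composed with homomorphisms from a group such as `Heis r`. -/
def zmodReduction {r s : ℕ} (hs : s ∣ r) : Multiplicative (ZMod r) →* Multiplicative (ZMod s) :=
  AddMonoidHom.toMultiplicative (ZMod.castHom hs (ZMod s)).toAddMonoidHom

theorem natCast_dvd_toAdd_of_mem_ker_zmodReduction {r s : ℕ} {hs : s ∣ r}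
    {a : Multiplicative (ZMod r)} (ha : a ∈ (zmodReduction hs).ker) :
    (s : ZMod r) ∣ a.toAdd := by
  obtain ⟨k, hk⟩ := ZMod.intCast_surjective a.toAdd
  have hcast : ZMod.castHom hs (ZMod s) a.toAdd = 0 := ha
  rw [← hk, map_intCast, ZMod.intCast_zmod_eq_zero_iff_dvd] at hcast
  simpa only [← hk, eq_intCast, Int.cast_natCast] using map_dvd (Int.castRingHom (ZMod r)) hcast

theorem card_ker_zmodReduction {r s t : ℕ} (hs : s ≠ 0) (hr : s * t = r) :
    Nat.card (zmodReduction (Dvd.intro t hr)).ker = t := by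
  have hsurj : Function.Surjective (zmodReduction (Dvd.intro t hr)) :=
    ZMod.castHom_surjective (Dvd.intro t hr)
  have hcard := (zmodReduction (Dvd.intro t hr)).ker.card_mul_index
  rw [Subgroup.index_ker, MonoidHom.range_eq_top.mpr hsurj, Subgroup.card_top,
    Nat.card_congr Multiplicative.toAdd, Nat.card_congr Multiplicative.toAdd, Nat.card_zmod,
    Nat.card_zmod] at hcard
  exact Nat.eq_of_mul_eq_mul_left hs.pos ((mul_comm _ _).trans (hcard.trans hr.symm))

theorem nonempty_ker_zmodReduction_mulEquiv {r s t : ℕ} (hs : s ≠ 0) (hr : s * t = r) :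
    Nonempty ((zmodReduction (Dvd.intro t hr)).ker ≃* Multiplicative (ZMod t)) := by
  have e := (zmodCyclicMulEquiv (G := (zmodReduction (Dvd.intro t hr)).ker) inferInstance).symm
  rw [card_ker_zmodReduction hs hr] at e
  exact ⟨e⟩

theorem zmod_natCast_dvd_natCast_gcd (r k : ℕ) : (k : ZMod r) ∣ (k.gcd r : ℕ) := by
  have bezout := congrArg (Int.cast : ℤ → ZMod r) (Nat.gcd_eq_gcd_ab k r)
  push_cast at bezout
  rw [ZMod.natCast_self, zero_mul, add_zero] at bezout
  exact Dvd.intro _ bezout.symm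

theorem zmod_dvd_natCast_prime_pow_of_ne_zero {p m : ℕ} (hp : p.Prime) {a : ZMod (p ^ (m + 1))}
    (ha : a ≠ 0) : a ∣ (p ^ m : ℕ) := by
  have : NeZero p := ⟨hp.ne_zero⟩
  obtain ⟨k, rfl⟩ := ZMod.natCast_zmod_surjective a
  obtain ⟨i, hi, hgcd⟩ := (Nat.dvd_prime_pow hp).mp (Nat.gcd_dvd_right k (p ^ (m + 1)))
  have hi_ne : i ≠ m + 1 := by
    rintro rfl
    exact ha ((ZMod.natCast_eq_zero_iff k _).mpr (hgcd ▸ Nat.gcd_dvd_left k _))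
  refine (zmod_natCast_dvd_natCast_gcd _ k).trans (Nat.cast_dvd_cast ?_)
  exact hgcd ▸ pow_dvd_pow p (by omega)

namespace Heis

variable {r s : ℕ}

/-- The only nontrivial coordinate of the commutator `h⁻¹ * g⁻¹ * h * g`, as a homomorphism
in `g`. -/
def commutatorCoord (h : Heis r) : Heis r →* Multiplicative (ZMod r) where
  toFun g := Multiplicative.ofAdd (h.x * g.z - g.x * h.z)
  map_one' := by simp
  map_mul' a b := by
    rw [← ofAdd_add, mul_x, mul_z]
    congr 1
    ring

theorem toAdd_commutatorCoord (h g : Heis r) :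
    (commutatorCoord h g).toAdd = h.x * g.z - g.x * h.z := rfl

theorem commutator_eq (h g : Heis r) :
    h⁻¹ * g⁻¹ * h * g = ⟨0, (commutatorCoord h g).toAdd, 0⟩ := by
  ext
  · simp
  · simp only [toAdd_commutatorCoord, mul_x, mul_y, inv_x, inv_y, inv_z]
    ring
  · simp

theorem centralizer_singleton_eq_ker (h : Heis r) :
    Subgroup.centralizer {h} = (commutatorCoord h).ker := by
  ext g
  have hcomm : h⁻¹ * g⁻¹ * h * g = 1 ↔ g * h = h * g := by
    rw [mul_assoc, ← mul_inv_rev, inv_mul_eq_one]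
  rw [Subgroup.mem_centralizer_singleton_iff, ← hcomm, commutator_eq, MonoidHom.mem_ker,
    Heis.ext_iff]
  simp

theorem pseudocentralizer_singleton_eq_comap (hs : s ∣ r) (h : Heis r) :
    pseudocentralizer (heisMap hs) {h} = (zmodReduction hs).ker.comap (commutatorCoord h) := by
  ext g
  simp only [mem_pseudocentralizer_iff, Set.mem_singleton_iff, forall_eq, Subgroup.mem_comap,
    MonoidHom.mem_ker]
  rw [commutator_eq, Heis.ext_iff]
  simp [heisMap, zmodReduction]

theorem mem_range_commutatorCoord_iff {h : Heis r} {a : Multiplicative (ZMod r)} :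
    a ∈ (commutatorCoord h).range ↔ a.toAdd ∈ Ideal.span {h.x, h.z} := by
  rw [Ideal.mem_span_pair]
  constructor
  · rintro ⟨g, rfl⟩
    exact ⟨g.z, -g.x, by rw [toAdd_commutatorCoord]; ring⟩
  · rintro ⟨u, v, huv⟩
    refine ⟨⟨-v, 0, u⟩, Multiplicative.toAdd.injective ?_⟩
    rw [← huv, toAdd_commutatorCoord]
    ring

theorem ker_zmodReduction_le_range_commutatorCoord (hs : s ∣ r) {h : Heis r}
    (hspan : (s : ZMod r) ∈ Ideal.span {h.x, h.z}) :
    (zmodReduction hs).ker ≤ (commutatorCoord h).range := fun _ ha =>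
  mem_range_commutatorCoord_iff.mpr <|
    Ideal.mem_of_dvd _ (natCast_dvd_toAdd_of_mem_ker_zmodReduction ha) hspan

theorem x_ne_zero_or_z_ne_zero_of_notMem_center {h : Heis r}
    (hh : h ∉ Subgroup.center (Heis r)) : h.x ≠ 0 ∨ h.z ≠ 0 := by
  contrapose! hh
  refine Subgroup.mem_center_iff.mpr fun g => ?_
  ext <;> simp [hh, add_comm]

theorem prime_pow_mem_span_of_notMem_center {p m : ℕ} (hp : p.Prime) {h : Heis (p ^ (m + 1))}
    (hh : h ∉ Subgroup.center (Heis (p ^ (m + 1)))) :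
    ((p ^ m : ℕ) : ZMod (p ^ (m + 1))) ∈ Ideal.span {h.x, h.z} := by
  rcases x_ne_zero_or_z_ne_zero_of_notMem_center hh with hx | hz
  · exact Ideal.mem_of_dvd _ (zmod_dvd_natCast_prime_pow_of_ne_zero hp hx)
      (Ideal.subset_span (Set.mem_insert _ _))
  · exact Ideal.mem_of_dvd _ (zmod_dvd_natCast_prime_pow_of_ne_zero hp hz)
      (Ideal.subset_span (Set.mem_insert_of_mem _ rfl))

end Heis

theorem statement9_general {r s t : ℕ} (hs : s ≠ 0) (hr : s * t = r) {h : Heis r}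
    (hspan : (s : ZMod r) ∈ Ideal.span {h.x, h.z}) :
    Nat.card (pseudocentralizer (Heis.heisMap (Dvd.intro t hr)) {h}) =
        t * Nat.card (Subgroup.centralizer {h}) ∧
      ∃ φ : pseudocentralizer (Heis.heisMap (Dvd.intro t hr)) {h} →* Multiplicative (ZMod t),
        Function.Surjective φ ∧
          φ.ker = (Subgroup.centralizer {h}).subgroupOf
            (pseudocentralizer (Heis.heisMap (Dvd.intro t hr)) {h}) := by
  rw [Heis.centralizer_singleton_eq_ker, Heis.pseudocentralizer_singleton_eq_comap]
  obtain ⟨e⟩ := nonempty_ker_zmodReduction_mulEquiv hs hr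
  obtain ⟨φ, hφ, hker⟩ := exists_surjective_ker_eq_ker_subgroupOf_comap
    (Heis.ker_zmodReduction_le_range_commutatorCoord (Dvd.intro t hr) hspan) e
  refine ⟨?_, φ, hφ, hker⟩
  have hcard := card_eq_card_mul_card_of_ker_eq_subgroupOf (Subgroup.ker_le_comap _ _) hφ hker
  rwa [Nat.card_congr Multiplicative.toAdd, Nat.card_zmod] at hcard

/-- if `h ∈ 𝓗(pⁿ)` is non-central, then `|P(h)| = p * |C(h)|` and
`P(h)/C(h) ≅ ℤ/pℤ` (phrased via a surjective homomorphism with kernel `C(h)`). -/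
theorem statement9 (p n : ℕ) (hp : p.Prime) (hn : 2 ≤ n) (h : Heis (p ^ n))
    (hh : h ∉ Subgroup.center (Heis (p ^ n))) :
    Nat.card (pseudocentralizer (heisQ p n) ({h} : Set (Heis (p ^ n)))) =
        p * Nat.card (Subgroup.centralizer ({h} : Set (Heis (p ^ n)))) ∧
      ∃ φ : pseudocentralizer (heisQ p n) ({h} : Set (Heis (p ^ n))) →* Multiplicative (ZMod p),
        Function.Surjective φ ∧
          φ.ker = (Subgroup.centralizer ({h} : Set (Heis (p ^ n)))).subgroupOf
            (pseudocentralizer (heisQ p n) ({h} : Set (Heis (p ^ n)))) := by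
  obtain ⟨m, rfl⟩ := Nat.exists_eq_add_of_le' (one_le_two.trans hn)
  exact statement9_general (pow_ne_zero m hp.ne_zero) (pow_succ p m).symm
    (Heis.prime_pow_mem_span_of_notMem_center hp hh)
end

section
/- Let p be a prime, n ≥ 2, and let q : 𝓗(pⁿ) → 𝓗(pⁿ⁻¹) be componentwise reduction modulo pⁿ⁻¹. If h ∈ 𝓗(pⁿ) is a non-central element, then |C(h)| = p² · |C(q(h))|, where C(h) is the centralizer of h in 𝓗(pⁿ) and C(q(h)) is the centralizer of q(h) in 𝓗(pⁿ⁻¹). -/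
/-! Commuting with `h = (x, y, z)` is the vanishing of the homomorphism `g ↦ x g_z - g_x z` into
`ℤ/rℤ`. Its image is the ideal generated by `x` and `z`, that is, by `d = gcd(x, z, r)`, so
`|C(h)| = r³ / (r / d) = r² d`. For `r = pⁿ`, a non-central `h` has `d ∣ pⁿ⁻¹`, hence reduction
modulo `pⁿ⁻¹` does not change `d`, and only the factor `r²` drops, by `p²`. -/

theorem exists_natCast_gcd_eq (R : Type*) [CommRing R] (a b : ℕ) :
    ∃ u v : R, ((a.gcd b : ℕ) : R) = a * u + b * v :=
  ⟨a.gcdA b, a.gcdB b, by exact_mod_cast congrArg (Int.cast : ℤ → R) (Nat.gcd_eq_gcd_ab a b)⟩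

namespace Heis

theorem natCard (r : ℕ) : Nat.card (Heis r) = r ^ 3 := by
  let toTriple : Heis r ≃ ZMod r × ZMod r × ZMod r :=
    { toFun a := (a.x, a.y, a.z), invFun t := ⟨t.1, t.2.1, t.2.2⟩ }
  rw [Nat.card_congr toTriple, Nat.card_prod, Nat.card_prod, Nat.card_zmod]
  ring

variable {r : ℕ}

theorem commute_iff_s10 (h g : Heis r) : Commute h g ↔ h.x * g.z = g.x * h.z := by
  rw [commute_iff_eq, Heis.ext_iff, mul_x, mul_y, mul_z, mul_x, mul_y, mul_z, add_comm h.x,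
    add_comm h.y, add_comm h.z]
  simp only [true_and, and_true, add_right_inj]

/-- The commutator with `h` as a homomorphism `g ↦ [h, g]`, where the commutator, a central element
`(0, t, 0)`, is identified with its middle coordinate `t`. -/
def commutatorHom (h : Heis r) : Heis r →* Multiplicative (ZMod r) where
  toFun g := Multiplicative.ofAdd (h.x * g.z - g.x * h.z)
  map_one' := by simp only [one_x, one_z, mul_zero, zero_mul, sub_zero, ofAdd_zero]
  map_mul' a b := by
    rw [← ofAdd_add, mul_x, mul_z]
    congr 1
    ring

theorem commutatorHom_apply (h g : Heis r) :
    commutatorHom h g = Multiplicative.ofAdd (h.x * g.z - g.x * h.z) := rfl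

theorem ker_commutatorHom (h : Heis r) : (commutatorHom h).ker = Subgroup.centralizer {h} := by
  ext g
  rw [MonoidHom.mem_ker, Subgroup.mem_centralizer_singleton_iff, commutatorHom_apply, ofAdd_eq_one,
    sub_eq_zero, ← commute_iff_s10, commute_iff_eq, eq_comm]

/-- The content of `h = (x, y, z)`: the greatest common divisor of `x`, `z` and the modulus `r`,
computed from the representatives of `x` and `z` in `[0, r)`. The coordinate `y` is left out because
it does not affect commutators with `h`. -/
def content (h : Heis r) : ℕ := (h.x.val.gcd h.z.val).gcd r

theorem dvd_content_iff {h : Heis r} {d : ℕ} :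
    d ∣ h.content ↔ d ∣ h.x.val ∧ d ∣ h.z.val ∧ d ∣ r := by
  rw [content, Nat.dvd_gcd_iff, Nat.dvd_gcd_iff, and_assoc]

theorem content_dvd_val_x (h : Heis r) : h.content ∣ h.x.val := (dvd_content_iff.1 dvd_rfl).1

theorem content_dvd_val_z (h : Heis r) : h.content ∣ h.z.val := (dvd_content_iff.1 dvd_rfl).2.1

theorem content_dvd (h : Heis r) : h.content ∣ r := (dvd_content_iff.1 dvd_rfl).2.2

section NeZero

variable [NeZero r]

theorem content_pos (h : Heis r) : 0 < h.content :=
  Nat.pos_of_dvd_of_pos h.content_dvd (NeZero.pos r)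

theorem content_heisMap {s : ℕ} (hs : s ∣ r) (h : Heis r) :
    (heisMap hs h).content = h.content.gcd s := by
  have dvd_val_castHom {d : ℕ} (hd : d ∣ s) {a : ZMod r} :
      d ∣ (ZMod.castHom hs (ZMod s) a).val ↔ d ∣ a.val := by
    rw [ZMod.castHom_apply, ZMod.cast_eq_val, ZMod.val_natCast, Nat.dvd_mod_iff hd]
  refine Nat.dvd_left_iff_eq.1 fun d => ?_
  rw [dvd_content_iff, Nat.dvd_gcd_iff, dvd_content_iff]
  constructor
  · rintro ⟨hx, hz, hd⟩
    exact ⟨⟨(dvd_val_castHom hd).1 hx, (dvd_val_castHom hd).1 hz, hd.trans hs⟩, hd⟩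
  · rintro ⟨⟨hx, hz, -⟩, hd⟩
    exact ⟨(dvd_val_castHom hd).2 hx, (dvd_val_castHom hd).2 hz, hd⟩

theorem natCast_content_dvd_commutator (h g : Heis r) :
    (h.content : ZMod r) ∣ h.x * g.z - g.x * h.z := by
  have natCast_dvd {a : ZMod r} (ha : h.content ∣ a.val) : (h.content : ZMod r) ∣ a := by
    simpa only [ZMod.natCast_zmod_val] using Nat.cast_dvd_cast (α := ZMod r) ha
  exact dvd_sub ((natCast_dvd h.content_dvd_val_x).mul_right _)
    ((natCast_dvd h.content_dvd_val_z).mul_left _)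

theorem exists_commutator_eq_content (h : Heis r) :
    ∃ u v : ZMod r, h.x * v - u * h.z = h.content := by
  obtain ⟨a, b, bezout_xz⟩ := exists_natCast_gcd_eq (ZMod r) h.x.val h.z.val
  obtain ⟨c, _, bezout_r⟩ := exists_natCast_gcd_eq (ZMod r) (h.x.val.gcd h.z.val) r
  rw [ZMod.natCast_zmod_val, ZMod.natCast_zmod_val] at bezout_xz
  rw [ZMod.natCast_self, zero_mul, add_zero, bezout_xz] at bezout_r
  refine ⟨-(b * c), a * c, ?_⟩
  rw [content, bezout_r]
  ring

theorem range_commutatorHom (h : Heis r) :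
    (commutatorHom h).range = Subgroup.zpowers (Multiplicative.ofAdd (h.content : ZMod r)) := by
  apply le_antisymm
  · rintro _ ⟨g, rfl⟩
    obtain ⟨c, hc⟩ := natCast_content_dvd_commutator h g
    refine Subgroup.mem_zpowers_iff.2 ⟨c.val, ?_⟩
    rw [commutatorHom_apply, hc, zpow_natCast, ← ofAdd_nsmul, nsmul_eq_mul, ZMod.natCast_zmod_val,
      mul_comm]
  · rw [Subgroup.zpowers_le]
    obtain ⟨u, v, huv⟩ := exists_commutator_eq_content h
    exact ⟨⟨u, 0, v⟩, congrArg Multiplicative.ofAdd huv⟩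

theorem index_centralizer (h : Heis r) :
    (Subgroup.centralizer {h}).index = r / h.content := by
  rw [← ker_commutatorHom, Subgroup.index_ker, range_commutatorHom, Nat.card_zpowers,
    orderOf_ofAdd_eq_addOrderOf, ZMod.addOrderOf_coe _ (NeZero.ne r),
    Nat.gcd_eq_right h.content_dvd]

theorem mem_center_iff_content_eq {h : Heis r} :
    h ∈ Subgroup.center (Heis r) ↔ h.content = r := by
  rw [← SetLike.mem_coe, ← Set.singleton_subset_iff, ← Subgroup.centralizer_eq_top_iff_subset,
    ← Subgroup.index_eq_one, index_centralizer,
    Nat.div_eq_iff_eq_mul_left h.content_pos h.content_dvd, one_mul, eq_comm]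

theorem natCard_centralizer (h : Heis r) :
    Nat.card (Subgroup.centralizer {h}) = r ^ 2 * h.content := by
  have index_pos : 0 < r / h.content :=
    Nat.div_pos (Nat.le_of_dvd (NeZero.pos r) h.content_dvd) h.content_pos
  apply Nat.eq_of_mul_eq_mul_right index_pos
  calc Nat.card (Subgroup.centralizer {h}) * (r / h.content)
      = r ^ 3 := by rw [← index_centralizer, Subgroup.card_mul_index, natCard]
    _ = r ^ 2 * h.content * (r / h.content) := by
        rw [mul_assoc, Nat.mul_div_cancel' h.content_dvd, ← pow_succ]

end NeZero

theorem content_dvd_pow_sub_one_of_notMem_center {p n : ℕ} (hp : p.Prime) {h : Heis (p ^ n)}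
    (hh : h ∉ Subgroup.center (Heis (p ^ n))) : h.content ∣ p ^ (n - 1) := by
  have : NeZero p := ⟨hp.ne_zero⟩
  obtain ⟨k, hkn, hk⟩ := (Nat.dvd_prime_pow hp).1 h.content_dvd
  have hne : k ≠ n := fun heq => hh (mem_center_iff_content_eq.2 (heq ▸ hk))
  exact hk ▸ pow_dvd_pow p (Nat.le_sub_one_of_lt (lt_of_le_of_ne hkn hne))

end Heis

/-- if `h ∈ 𝓗(pⁿ)` is non-central, then `|C(h)| = p² * |C(q(h))|`. -/
theorem statement10 (p n : ℕ) (hp : p.Prime) (hn : 2 ≤ n) (h : Heis (p ^ n))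
    (hh : h ∉ Subgroup.center (Heis (p ^ n))) :
    Nat.card (Subgroup.centralizer ({h} : Set (Heis (p ^ n)))) =
      p ^ 2 * Nat.card (Subgroup.centralizer ({heisQ p n h} : Set (Heis (p ^ (n - 1))))) := by
  have : NeZero p := ⟨hp.ne_zero⟩
  have content_heisQ : (heisQ p n h).content = h.content := by
    rw [heisQ, Heis.content_heisMap,
      Nat.gcd_eq_left (Heis.content_dvd_pow_sub_one_of_notMem_center hp hh)]
  calc Nat.card (Subgroup.centralizer {h})
      = (p ^ n) ^ 2 * h.content := Heis.natCard_centralizer h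
    _ = p ^ 2 * ((p ^ (n - 1)) ^ 2 * (heisQ p n h).content) := by
        rw [content_heisQ, ← mul_assoc, ← mul_pow, mul_pow_sub_one (by lia)]
    _ = p ^ 2 * Nat.card (Subgroup.centralizer {heisQ p n h}) := by
        rw [Heis.natCard_centralizer]
end

section
/- Let p be a prime, n ≥ 2, and let q : 𝓗(pⁿ) → 𝓗(pⁿ⁻¹) be componentwise reduction modulo pⁿ⁻¹. If H is a subgroup of 𝓗(pⁿ) that is not contained in the center Z(𝓗(pⁿ)), then the quotient group P(H)/C(H) is isomorphic to (ℤ/pℤ)^k, where k = 1 or k = 2. -/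
/-!
The commutator of `s` and `g` is additive in `g`, and an element of `ℤ/pⁿℤ` vanishes modulo `pⁿ⁻¹`
exactly when `p` kills it. Hence `g ∈ P(H)` if and only if `g ^ p ∈ C(H)`, so that `P(H)/C(H)` is
the `p`-torsion of `𝓗(pⁿ)/C(H)`, which is a quotient of `(ℤ/pⁿℤ)²`. The `p`-torsion of a finite
abelian group `A` has as many elements as `A/pA`, hence does not grow in quotients: it has at most
`p²` elements here, and the elementary abelian group `P(H)/C(H)` has rank at most `2`. The rank is
not `0`, because a nontrivial abelian group killed by `pⁿ` has nontrivial `p`-torsion.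
-/

theorem exists_mulEquiv_pi_zmod_of_pow_eq_one {T : Type*} [CommGroup T] [Finite T] {p : ℕ}
    (hp : p.Prime) (h : ∀ t : T, t ^ p = 1) :
    ∃ k : ℕ, Nonempty (T ≃* Multiplicative (Fin k → ZMod p)) := by
  have := Fact.mk hp
  let : Module (ZMod p) (Additive T) := AddCommGroup.zmodModule (G := Additive T) (n := p) h
  exact ⟨_, ⟨(Module.finBasis (ZMod p) (Additive T)).equivFun.toAddEquiv.toMultiplicativeRight⟩⟩

section PowKer

variable {A B : Type*} [CommGroup A] [CommGroup B]

theorem card_ker_powMonoidHom_dvd_of_surjective [Finite A] {f : A →* B}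
    (hf : Function.Surjective f) (d : ℕ) :
    Nat.card (powMonoidHom d : B →* B).ker ∣ Nat.card (powMonoidHom d : A →* A).ker := by
  have : Finite B := Finite.of_surjective f hf
  have hrange : (powMonoidHom d : A →* A).range.map f = (powMonoidHom d : B →* B).range := by
    have hcomm : f.comp (powMonoidHom d) = (powMonoidHom d).comp f :=
      MonoidHom.ext fun a => map_pow f a d
    rw [MonoidHom.map_range, hcomm, MonoidHom.range_comp, MonoidHom.range_eq_top.mpr hf,
      ← MonoidHom.range_eq_map]
  rw [← Subgroup.index_range, ← Subgroup.index_range, ← hrange]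
  exact Subgroup.index_map_dvd _ hf

theorem card_ker_powMonoidHom_prod (d : ℕ) :
    Nat.card (powMonoidHom d : A × B →* A × B).ker =
      Nat.card (powMonoidHom d : A →* A).ker * Nat.card (powMonoidHom d : B →* B).ker := by
  have hprod : (powMonoidHom d : A × B →* A × B) =
      (powMonoidHom d).prodMap (powMonoidHom d) := rfl
  rw [hprod, MonoidHom.ker_prodMap, Nat.card_congr (Subgroup.prodEquiv _ _).toEquiv, Nat.card_prod]

end PowKer

section PowMem

variable {G : Type*} [Group G] {K : Subgroup G} {p : ℕ}

theorem exists_surjective_hom_ker_eq_ker_subgroupOf {A : Type*} [CommGroup A] [Finite A]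
    (hp : p.Prime) {f : G →* A} (hf : Function.Surjective f) {P : Subgroup G}
    (hP : ∀ g, g ∈ P ↔ g ^ p ∈ f.ker) :
    ∃ k : ℕ, Nat.card (powMonoidHom p : A →* A).ker = p ^ k ∧
      ∃ φ : P →* Multiplicative (Fin k → ZMod p),
        Function.Surjective φ ∧ φ.ker = f.ker.subgroupOf P := by
  let T : Subgroup A := (powMonoidHom p).ker
  obtain rfl : P = T.comap f := by
    ext g
    rw [hP, MonoidHom.mem_ker, map_pow]
    rfl
  obtain ⟨k, ⟨e⟩⟩ := exists_mulEquiv_pi_zmod_of_pow_eq_one hp fun t : T => Subtype.ext t.2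
  have hT : Nat.card T = p ^ k := by
    rw [Nat.card_congr (e.toEquiv.trans Multiplicative.toAdd), Nat.card_fun, Nat.card_zmod,
      Nat.card_fin]
  refine ⟨k, hT, e.toMonoidHom.comp (f.subgroupComap T),
    e.surjective.comp (f.subgroupComap_surjective_of_surjective T hf), ?_⟩
  ext g
  exact (map_eq_one_iff e e.injective).trans Subtype.ext_iff

theorem exists_surjective_hom_ker_eq_subgroupOf {A : Type*} [CommGroup A] [Finite A]
    (hp : p.Prime) {f : G →* A} (hf : Function.Surjective f) (hK : f.ker ≤ K) {P : Subgroup G}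
    (hP : ∀ g, g ∈ P ↔ g ^ p ∈ K) :
    ∃ k : ℕ, p ^ k ∣ Nat.card (powMonoidHom p : A →* A).ker ∧
      ∃ φ : P →* Multiplicative (Fin k → ZMod p),
        Function.Surjective φ ∧ φ.ker = K.subgroupOf P := by
  let π : G →* A ⧸ K.map f := (QuotientGroup.mk' (K.map f)).comp f
  have hπ : Function.Surjective π := (QuotientGroup.mk'_surjective _).comp hf
  have hπker : π.ker = K := by
    rw [← MonoidHom.comap_ker, QuotientGroup.ker_mk', Subgroup.comap_map_eq_self hK]
  obtain ⟨k, hk, φ, hφ, hker⟩ :=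
    exists_surjective_hom_ker_eq_ker_subgroupOf hp hπ fun g => by rw [hP, hπker]
  exact ⟨k, hk ▸ card_ker_powMonoidHom_dvd_of_surjective (QuotientGroup.mk'_surjective _) p,
    φ, hφ, by rw [hker, hπker]⟩

theorem exists_notMem_pow_mem {g : G} (hg : g ∉ K) {n : ℕ} (hgn : g ^ p ^ n ∈ K) :
    ∃ x ∉ K, x ^ p ∈ K := by
  induction n with
  | zero => exact absurd (by simpa using hgn) hg
  | succ n ih =>
    by_cases hn : g ^ p ^ n ∈ K
    · exact ih hn
    · exact ⟨g ^ p ^ n, hn, by rwa [← pow_mul, ← pow_succ]⟩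

end PowMem

theorem castHom_eq_zero_iff_mul_eq_zero {d s r : ℕ} (hd : d ≠ 0) (hr : d * s = r) (h : s ∣ r)
    (a : ZMod r) : ZMod.castHom h (ZMod s) a = 0 ↔ (d : ZMod r) * a = 0 := by
  obtain ⟨m, rfl⟩ := ZMod.intCast_surjective a
  rw [map_intCast, ← Int.cast_natCast d, ← Int.cast_mul, ZMod.intCast_zmod_eq_zero_iff_dvd,
    ZMod.intCast_zmod_eq_zero_iff_dvd, ← hr, Nat.cast_mul,
    Int.mul_dvd_mul_iff_left (Nat.cast_ne_zero.mpr hd)]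

namespace Heis

variable {r : ℕ}

/-- The commutator form on the Heisenberg group: the commutator `s⁻¹ * g⁻¹ * s * g` is the central
element `(0, commForm s g, 0)`. -/
def commForm (s g : Heis r) : ZMod r := s.x * g.z - g.x * s.z

theorem commForm_pow_right (s g : Heis r) (k : ℕ) : commForm s (g ^ k) = k * commForm s g := by
  induction k with
  | zero => simp [commForm]
  | succ k ih =>
    simp only [commForm, pow_succ, mul_x, mul_z, Nat.cast_succ] at ih ⊢
    linear_combination ih

theorem commute_iff_commForm_eq_zero {s g : Heis r} : Commute s g ↔ commForm s g = 0 := by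
  simp only [commute_iff_eq, Heis.ext_iff, mul_x, mul_y, mul_z, commForm, add_comm g.x,
    add_comm g.z, add_comm g.y, add_right_inj, sub_eq_zero, true_and, and_true]

theorem mem_centralizer_iff_commForm {S : Set (Heis r)} {g : Heis r} :
    g ∈ Subgroup.centralizer S ↔ ∀ s ∈ S, commForm s g = 0 :=
  forall₂_congr fun _ _ => commute_iff_commForm_eq_zero

theorem commForm_heisMap {t : ℕ} (h : t ∣ r) (s g : Heis r) :
    commForm (heisMap h s) (heisMap h g) = ZMod.castHom h (ZMod t) (commForm s g) := by
  simp only [commForm, heisMap, MonoidHom.coe_mk, OneHom.coe_mk, map_sub, map_mul]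

theorem mem_pseudocentralizer_heisMap_iff_pow_mem_centralizer {d t : ℕ} (hd : d ≠ 0)
    (hr : d * t = r) (h : t ∣ r) {S : Set (Heis r)} {g : Heis r} :
    g ∈ pseudocentralizer (heisMap h) S ↔ g ^ d ∈ Subgroup.centralizer S := by
  rw [mem_pseudocentralizer_iff, mem_centralizer_iff_commForm]
  refine forall₂_congr fun s _ => ?_
  rw [pc_mem_ker_iff, commute_iff_commForm_eq_zero, commForm_heisMap,
    castHom_eq_zero_iff_mul_eq_zero hd hr, commForm_pow_right]

/-- The projection `(x, y, z) ↦ (x, z)` along the `y`-axis. Its target is written multiplicatively,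
so that it is a homomorphism of groups. -/
def projXZ (r : ℕ) : Heis r →* Multiplicative (ZMod r) × Multiplicative (ZMod r) where
  toFun g := (.ofAdd g.x, .ofAdd g.z)
  map_one' := rfl
  map_mul' _ _ := rfl

theorem projXZ_surjective : Function.Surjective (projXZ r) :=
  fun v => ⟨⟨v.1.toAdd, 0, v.2.toAdd⟩, rfl⟩

theorem ker_projXZ_le_centralizer (S : Set (Heis r)) :
    (projXZ r).ker ≤ Subgroup.centralizer S := by
  intro g hg
  obtain ⟨hx, hz⟩ : g.x = 0 ∧ g.z = 0 := Prod.ext_iff.mp hg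
  exact mem_centralizer_iff_commForm.mpr fun s _ => by simp [commForm, hx, hz]

theorem exists_surjective_hom_ker_eq_centralizer [NeZero r] {p t : ℕ} (hp : p.Prime)
    (hr : p * t = r) (h : t ∣ r) (S : Set (Heis r)) :
    ∃ k ≤ 2, ∃ φ : pseudocentralizer (heisMap h) S →* Multiplicative (Fin k → ZMod p),
      Function.Surjective φ ∧
        φ.ker = (Subgroup.centralizer S).subgroupOf (pseudocentralizer (heisMap h) S) := by
  obtain ⟨k, hk, hφ⟩ := exists_surjective_hom_ker_eq_subgroupOf hp projXZ_surjective
    (ker_projXZ_le_centralizer S)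
    fun _ => mem_pseudocentralizer_heisMap_iff_pow_mem_centralizer hp.ne_zero hr h
  rw [card_ker_powMonoidHom_prod, IsCyclic.card_powMonoidHom_ker, ← sq] at hk
  have hgcd := pow_dvd_pow_of_dvd (Nat.gcd_dvd_right (Nat.card (Multiplicative (ZMod r))) p) 2
  exact ⟨k, (Nat.pow_dvd_pow_iff_le_right hp.one_lt).mp (hk.trans hgcd), hφ⟩

theorem pow_modulus_mem_centralizer (S : Set (Heis r)) (g : Heis r) :
    g ^ r ∈ Subgroup.centralizer S :=
  mem_centralizer_iff_commForm.mpr fun s _ => by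
    rw [commForm_pow_right, ZMod.natCast_self, zero_mul]

theorem not_pseudocentralizer_heisQ_le_centralizer {p n : ℕ} (hp : p ≠ 0) (hn : n ≠ 0)
    {S : Set (Heis (p ^ n))} (hS : ¬ S ⊆ Subgroup.center (Heis (p ^ n))) :
    ¬ pseudocentralizer (heisQ p n) S ≤ Subgroup.centralizer S := by
  obtain ⟨g, hg⟩ : ∃ g, g ∉ Subgroup.centralizer S := by
    simpa [Subgroup.eq_top_iff'] using mt Subgroup.centralizer_eq_top_iff_subset.mp hS
  obtain ⟨x, hx, hxp⟩ := exists_notMem_pow_mem hg (pow_modulus_mem_centralizer S g)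
  exact fun hle => hx <| hle <|
    (mem_pseudocentralizer_heisMap_iff_pow_mem_centralizer hp (mul_pow_sub_one hn p) _).mpr hxp

end Heis

theorem statement12_general (p n : ℕ) (hp : p.Prime) (hn : n ≠ 0) (S : Set (Heis (p ^ n)))
    (hS : ¬ S ⊆ Subgroup.center (Heis (p ^ n))) :
    ∃ k : ℕ, (k = 1 ∨ k = 2) ∧
      ∃ φ : pseudocentralizer (heisQ p n) S →* Multiplicative (Fin k → ZMod p),
        Function.Surjective φ ∧
          φ.ker = (Subgroup.centralizer S).subgroupOf (pseudocentralizer (heisQ p n) S) := by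
  have : NeZero (p ^ n) := ⟨pow_ne_zero n hp.ne_zero⟩
  obtain ⟨k, hk, φ, hφ, hker⟩ := Heis.exists_surjective_hom_ker_eq_centralizer hp
    (mul_pow_sub_one hn p) (pow_dvd_pow p (Nat.sub_le n 1)) S
  have hk0 : k ≠ 0 := by
    rintro rfl
    refine Heis.not_pseudocentralizer_heisQ_le_centralizer hp.ne_zero hn hS ?_
    rw [← Subgroup.subgroupOf_eq_top]
    exact hker.symm.trans (Subgroup.eq_top_iff' _ |>.mpr fun g => Subsingleton.elim _ _)
  exact ⟨k, by lia, φ, hφ, hker⟩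

/-- if `H ≤ 𝓗(pⁿ)` is not contained in the center, then `P(H)/C(H) ≅ (ℤ/pℤ)^k`
with `k = 1` or `k = 2` (phrased via a surjective homomorphism with kernel `C(H)`). -/
theorem statement12 (p n : ℕ) (hp : p.Prime) (hn : 2 ≤ n) (H : Subgroup (Heis (p ^ n)))
    (hH : ¬ H ≤ Subgroup.center (Heis (p ^ n))) :
    ∃ k : ℕ, (k = 1 ∨ k = 2) ∧
      ∃ φ : pseudocentralizer (heisQ p n) (H : Set (Heis (p ^ n))) →*
          Multiplicative (Fin k → ZMod p),
        Function.Surjective φ ∧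
          φ.ker = (Subgroup.centralizer (H : Set (Heis (p ^ n)))).subgroupOf
            (pseudocentralizer (heisQ p n) (H : Set (Heis (p ^ n)))) :=
  statement12_general p n hp (by lia) H hH
end

section
/- Let 1 → G₁ →f G →q G₂ → 1 be a short exact sequence of finite groups. For every subgroup H of G, the pseudo Chermak-Delgado measure satisfies m_s(H) = m(q(H)) · |G₁| · |im f ∩ H|, where m(q(H)) = |q(H)| · |C_{G₂}(q(H))| is the Chermak-Delgado measure of q(H) in G₂. -/
/-!
Since `[h, g] ∈ ker q` says that `q h` and `q g` commute, the pseudocentralizer of `H` is the full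
preimage under `q` of the centralizer of `q(H)`. Its order is therefore `|C(q(H))| * |ker q|`, while
`|H| = |q(H)| * |ker q ∩ H|` by the first isomorphism theorem, and exactness identifies `ker q`
with `im f`, a copy of `G₁`. Counting in `ℕ∞` makes this argument independent of finiteness.
-/

section

variable {G K : Type*} [Group G] [Group K] (q : G →* K)

theorem enatCard_eq_card_range_mul_card_ker :
    ENat.card G = ENat.card q.range * ENat.card q.ker := by
  rw [← ENat.card_prod]
  exact ENat.card_congr <| Subgroup.groupEquivQuotientProdSubgroup.trans <|
    (QuotientGroup.quotientKerEquivRange q).toEquiv.prodCongr (Equiv.refl _)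

theorem enatCard_subgroup_eq_card_map_mul_card_ker_inf (H : Subgroup G) :
    ENat.card H = ENat.card (H.map q) * ENat.card (q.ker ⊓ H : Subgroup G) := by
  have card_ker_domRestrict :
      ENat.card (q.domRestrict H).ker = ENat.card (q.ker ⊓ H : Subgroup G) := by
    rw [MonoidHom.ker_domRestrict, ← Subgroup.inf_subgroupOf_right]
    exact ENat.card_congr (Subgroup.subgroupOfEquivOfLe inf_le_right).toEquiv
  rw [enatCard_eq_card_range_mul_card_ker (q.domRestrict H), MonoidHom.domRestrict_range,
    card_ker_domRestrict]

theorem enatCard_comap_eq_card_range_inf_mul_card_ker (L : Subgroup K) :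
    ENat.card (L.comap q) = ENat.card (q.range ⊓ L : Subgroup K) * ENat.card q.ker := by
  rw [enatCard_subgroup_eq_card_map_mul_card_ker_inf q, Subgroup.map_comap_eq,
    inf_eq_left.mpr (Subgroup.ker_le_comap q L)]

theorem pseudocentralizer_eq_comap_centralizer_image (S : Set G) :
    pseudocentralizer q S = (Subgroup.centralizer (q '' S)).comap q := by
  ext g
  simp only [mem_pseudocentralizer_iff, pc_mem_ker_iff, Subgroup.mem_comap,
    Subgroup.mem_centralizer_iff, Set.forall_mem_image, commute_iff_eq]

theorem enatCard_pseudocentralizer_of_surjective (hq : Function.Surjective q) (S : Set G) :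
    ENat.card (pseudocentralizer q S) =
      ENat.card (Subgroup.centralizer (q '' S)) * ENat.card q.ker := by
  rw [pseudocentralizer_eq_comap_centralizer_image,
    enatCard_comap_eq_card_range_inf_mul_card_ker, MonoidHom.range_eq_top.mpr hq, top_inf_eq]

end

theorem statement15_general {G₁ G G₂ : Type*} [Group G₁] [Group G] [Group G₂]
    (f : G₁ →* G) (q : G →* G₂) (hf : Function.Injective f) (hq : Function.Surjective q)
    (hfq : f.range = q.ker) (H : Subgroup G) :
    ENat.card H * ENat.card (pseudocentralizer q (H : Set G)) =
      (ENat.card (H.map q) *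
        ENat.card (Subgroup.centralizer ((H.map q : Subgroup G₂) : Set G₂))) *
        ENat.card G₁ * ENat.card (f.range ⊓ H : Subgroup G) := by
  have card_ker : ENat.card q.ker = ENat.card G₁ := by
    rw [← hfq]
    exact (ENat.card_congr (MonoidHom.ofInjective hf).toEquiv).symm
  rw [enatCard_subgroup_eq_card_map_mul_card_ker_inf q H,
    enatCard_pseudocentralizer_of_surjective q hq, card_ker, hfq, Subgroup.coe_map]
  ring

/-- for a short exact sequence `1 → G₁ → G → G₂ → 1` of finite groups and any
subgroup `H ≤ G`: `m_s(H) = m(q(H)) * |G₁| * |im f ∩ H|`. -/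
theorem statement15 {G₁ G G₂ : Type*} [Group G₁] [Group G] [Group G₂]
    [Finite G₁] [Finite G] [Finite G₂]
    (f : G₁ →* G) (q : G →* G₂) (hf : Function.Injective f) (hq : Function.Surjective q)
    (hfq : f.range = q.ker) (H : Subgroup G) :
    Nat.card H * Nat.card (pseudocentralizer q (H : Set G)) =
      (Nat.card (H.map q) * Nat.card (Subgroup.centralizer ((H.map q : Subgroup G₂) : Set G₂))) *
        Nat.card G₁ * Nat.card ((f.range ⊓ H : Subgroup G)) := by
  rw [← Nat.cast_inj (R := ℕ∞)]
  simpa only [Nat.cast_mul, ENat.card_eq_coe_natCard] using statement15_general f q hf hq hfq H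
end
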